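/- Let S be a regular group-bound semigroup all of whose D-classes (with respect to Green's relation D) are finite. Then for all x, y ∈ S, x ∼ y if and only if x ≡ y; that is, x and y are conjugate (in the transitive-closure-of-uv∼vu sense) if and only if χ_φ(x) = χ_φ(y) for every finite-dimensional complex representation φ of S. -/

import Mathlib

namespace SgConjPaper

/-- `spow x n = x^(n+1)`: positive powers of an element of a semigroup. -/
def spow {S : Type*} [Semigroup S] (x : S) : ℕ → S
  | 0 => x
  | n + 1 => spow x n * x

/-- `a` lies in the maximal subgroup of `S` whose identity is the idempotent
`e` (i.e. `e` is a two-sided identity for `a` and `a` is invertible over `e`). -/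
def InMaxSubgroup {S : Type*} [Semigroup S] (e a : S) : Prop :=
  e * a = a ∧ a * e = a ∧ ∃ b : S, e * b = b ∧ b * e = b ∧ a * b = e ∧ b * a = e

/-- `e` is the idempotent `e_x`: the identity of the maximal subgroup
containing some positive power of `x`. -/
def IsEIdem {S : Type*} [Semigroup S] (x e : S) : Prop :=
  ∃ k : ℕ, InMaxSubgroup e (spow x k)

/-- A semigroup is group-bound if some positive power of every element lies
in a subgroup. -/
def GroupBound (S : Type*) [Semigroup S] : Prop := ∀ x : S, ∃ e : S, IsEIdem x e

/-- Primary conjugacy: `x = uv`, `y = vu` for some `u, v ∈ S¹`. -/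
def PrimConj {S : Type*} [Semigroup S] (x y : S) : Prop :=
  ∃ u v : WithOne S, (x : WithOne S) = u * v ∧ (y : WithOne S) = v * u

/-- Conjugacy `∼`: the transitive closure of primary conjugacy. -/
def SgConj {S : Type*} [Semigroup S] : S → S → Prop := Relation.TransGen PrimConj

/-- Conjugacy in the character sense `≡`: equal traces under every
finite-dimensional complex representation. -/
def CharEq {S : Type*} [Semigroup S] (x y : S) : Prop :=
  ∀ (V : Type) (_ : AddCommGroup V) (_ : Module ℂ V) (_ : FiniteDimensional ℂ V)
    (φ : S →ₙ* Module.End ℂ V),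
    LinearMap.trace ℂ V (φ x) = LinearMap.trace ℂ V (φ y)

/-- A semigroup is regular if for every `a` there is `b` with `a = aba`. -/
def Regular (S : Type*) [Semigroup S] : Prop := ∀ a : S, ∃ b : S, a * b * a = a

/-- Green's relation `R`. -/
def RRel {S : Type*} [Semigroup S] (x y : S) : Prop :=
  (∃ u : WithOne S, (x : WithOne S) = y * u) ∧ (∃ v : WithOne S, (y : WithOne S) = x * v)

/-- Green's relation `L`. -/
def LRel {S : Type*} [Semigroup S] (x y : S) : Prop :=
  (∃ u : WithOne S, (x : WithOne S) = u * y) ∧ (∃ v : WithOne S, (y : WithOne S) = v * x)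

/-- Green's relation `D` (= `L ∘ R`). -/
def DRel {S : Type*} [Semigroup S] (x y : S) : Prop := ∃ z : S, LRel x z ∧ RRel z y

/-- Green's relation `H`. -/
def HRel {S : Type*} [Semigroup S] (x y : S) : Prop := LRel x y ∧ RRel x y

/-- All `D`-classes of `S` are finite. -/
def FiniteDClasses (S : Type*) [Semigroup S] : Prop := ∀ x : S, {y : S | DRel x y}.Finite

theorem spow_succ' {S : Type*} [Semigroup S] (x : S) (n : ℕ) :
    spow x (n + 1) = x * spow x n := by
  induction n with
  | zero => rfl
  | succ n ih => rw [spow, ih, mul_assoc, ← spow, ih]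

/-- Data of the idempotent `e` of `x` with the inverse `g` of `x * e` in the subgroup at `e`. -/
structure Q {S : Type*} [Semigroup S] (x e g : S) : Prop where
  ee : e * e = e
  ex : e * x = x * e
  eg : e * g = g
  ge : g * e = g
  xg : x * g = e
  gx : g * x = e * e

theorem exists_Q {S : Type*} [Semigroup S] (hGB : GroupBound S) (x : S) :
    ∃ e g, Q x e g ∧ ∃ k, spow x k * e = spow x k := by
  obtain ⟨e, k, h1, h2, b, h3, h4, h5, h6⟩ := hGB x
  have ee : e * e = e := by
    calc e * e = e * (spow x k * b) := by rw [h5]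
      _ = e := by rw [← mul_assoc, h1, h5]
  have hc : x * spow x k = spow x k * x := by rw [← spow_succ', spow]
  have e1 : e * x * e = x * e := by
    calc e * x * e = e * (x * spow x k) * b := by rw [← h5]; simp only [mul_assoc]
      _ = (e * spow x k) * x * b := by rw [hc]; simp only [mul_assoc]
      _ = x * spow x k * b := by rw [h1, hc]
      _ = x * e := by rw [mul_assoc, h5]
  have e2 : e * x * e = e * x := by
    calc e * x * e = b * (spow x k * x) * e := by rw [← h6]; simp only [mul_assoc]
      _ = b * x * (spow x k * e) := by rw [← hc]; simp only [mul_assoc]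
      _ = b * (spow x k * x) := by rw [h2, ← hc]; simp only [mul_assoc]
      _ = e * x := by rw [← mul_assoc, h6]
  have ex : e * x = x * e := by rw [← e2, e1]
  have hr : ∃ r, x * r = e := by
    cases k with
    | zero => exact ⟨b, h5⟩
    | succ k => exact ⟨spow x k * b, by rw [← mul_assoc, ← spow_succ', h5]⟩
  have hl : ∃ r, r * x = e := by
    cases k with
    | zero => exact ⟨b, h6⟩
    | succ k => exact ⟨b * spow x k, by rw [mul_assoc, ← spow, h6]⟩
  obtain ⟨r, hr⟩ := hr
  obtain ⟨l, hl⟩ := hl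
  have A : x * (e * r * e) = e := by
    calc x * (e * r * e) = (x * e) * r * e := by simp only [mul_assoc]
      _ = e * (x * r) * e := by rw [← ex]; simp only [mul_assoc]
      _ = e := by rw [hr, ee, ee]
  have B : (e * l * e) * x = e := by
    calc (e * l * e) * x = e * l * (e * x) := by simp only [mul_assoc]
      _ = e * (l * x) * e := by rw [ex]; simp only [mul_assoc]
      _ = e := by rw [hl, ee, ee]
  have C : e * r * e = e * l * e := by
    calc e * r * e = e * (e * r * e) := by simp only [← mul_assoc, ee]
      _ = (e * l * e) * (x * (e * r * e)) := by rw [← mul_assoc _ x, B]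
      _ = e * l * e := by rw [A, mul_assoc, ee]
  refine ⟨e, e * r * e, ⟨ee, ex, ?_, ?_, A, ?_⟩, k, h2⟩
  · simp only [← mul_assoc, ee]
  · rw [mul_assoc, ee]
  · rw [C, B, ee]

theorem Q.gx' {S : Type*} [Semigroup S] {x e g : S} (h : Q x e g) : g * x = e := by
  rw [h.gx, h.ee]

theorem primConj_mul {S : Type*} [Semigroup S] (u v : S) : PrimConj (u * v) (v * u) :=
  ⟨u, v, by simp, by simp⟩

theorem sgConj_refl {S : Type*} [Semigroup S] (x : S) : SgConj x x :=
  Relation.TransGen.single ⟨x, 1, by simp, by simp⟩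

theorem primConj_symm {S : Type*} [Semigroup S] {x y : S} (h : PrimConj x y) : PrimConj y x := by
  obtain ⟨u, v, h1, h2⟩ := h
  exact ⟨v, u, h2, h1⟩

theorem sgConj_symm {S : Type*} [Semigroup S] {x y : S} (h : SgConj x y) : SgConj y x := by
  induction h with
  | single h => exact .single (primConj_symm h)
  | tail _ h ih => exact .trans (.single (primConj_symm h)) ih

theorem sgConj_mul_idem {S : Type*} [Semigroup S] (hreg : Regular S) (k : ℕ) :
    ∀ x e g : S, Q x e g → spow x k * e = spow x k → SgConj x (x * e) := by
  induction k with
  | zero =>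
    intro x e g _ h
    have h : x * e = x := h
    rw [h]; exact sgConj_refl x
  | succ k ih =>
    intro x e g q h
    obtain ⟨b, hb⟩ := hreg x
    obtain ⟨ee, ex, eg, ge, xg, _⟩ := id q
    have gx := q.gx'
    have hb' : ∀ z, x * (b * (x * z)) = x * z := fun z => by
      rw [← mul_assoc, ← mul_assoc, hb]
    have hb0 : x * (b * x) = x := by rw [← mul_assoc, hb]
    have ex' : ∀ z, e * (x * z) = x * (e * z) := fun z => by
      rw [← mul_assoc, ex, mul_assoc]
    have ee' : ∀ z, e * (e * z) = e * z := fun z => by rw [← mul_assoc, ee]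
    have eg' : ∀ z, e * (g * z) = g * z := fun z => by rw [← mul_assoc, eg]
    have xg' : ∀ z, x * (g * z) = e * z := fun z => by rw [← mul_assoc, xg]
    have gx1 : ∀ z, g * (x * z) = e * z := fun z => by rw [← mul_assoc, gx]

    have gb : ∀ z, g * (b * (x * z)) = g * z := fun z => by
      calc g * (b * (x * z)) = g * (g * (x * (b * (x * z)))) := by rw [gx1, ← mul_assoc g e, ge]
        _ = g * z := by rw [hb', gx1, ← mul_assoc g e, ge]
    have eb : ∀ z, e * (b * (x * z)) = e * z := fun z => by
      rw [← xg, mul_assoc, gb, mul_assoc]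
    have gb0 : g * (b * x) = g * e := by
      calc g * (b * x) = g * (g * (x * (b * x))) := by rw [gx1, ← mul_assoc g e, ge]
        _ = g * e := by rw [hb0, gx]
    have s1 : PrimConj x (b * x * x) := by
      have := primConj_mul x (b * x)
      rwa [hb0] at this
    have hpow : ∀ n, spow (b * x * x) n = b * spow x (n + 1) := by
      intro n
      induction n with
      | zero => simp only [spow, mul_assoc]
      | succ n ihn =>
        rw [spow, ihn, spow, spow, spow]
        simp only [mul_assoc, hb']
    have q' : Q (b * x * x) (b * x * e) (b * x * g) := by
      constructor
      · simp only [mul_assoc, eb, ee]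
      · simp only [mul_assoc, eb, hb', ex', ex]
      · simp only [mul_assoc, eb, eg]
      · simp only [mul_assoc, gb, ge]
      · simp only [mul_assoc]; rw [hb', xg]
      · simp only [mul_assoc, gb, gx, eb, ee]
    have s2 := ih _ _ _ q' (by
      rw [hpow, spow]
      have : spow x k * x * e = spow x k * x := h
      calc b * (spow x k * x) * (b * x * e) = b * (spow x k * (x * (b * (x * e)))) := by
            simp only [mul_assoc]
        _ = b * (spow x k * x * e) := by rw [hb']; simp only [mul_assoc]
        _ = _ := by rw [this])
    have s3 : PrimConj (b * x * x * (b * x * e)) (x * e) := by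
      have := primConj_mul (b * x * e) (x * e)
      have e1 : b * x * e * (x * e) = b * x * x * (b * x * e) := by
        simp only [mul_assoc, hb', ex', ee]
      have e2 : x * e * (b * x * e) = x * e := by
        simp only [mul_assoc, eb, ee]
      rwa [e1, e2] at this
    exact (Relation.TransGen.trans (.single s1) s2).tail s3

/-- A left-invertible element of a local monoid is invertible. -/
theorem left_inv_inv {S : Type*} [Semigroup S] (hGB : GroupBound S) {e w c : S}
    (ew : e * w = w) (cw : c * w = e) :
    ∃ v, e * v = v ∧ v * e = v ∧ w * v = e ∧ v * w = e := by
  obtain ⟨e', v, q, k, hk⟩ := exists_Q hGB w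
  have : ∀ n, ∃ c', c' * spow w n = e := by
    intro n
    induction n with
    | zero => exact ⟨c, cw⟩
    | succ n ih =>
      obtain ⟨c', h⟩ := ih
      exact ⟨c * c', by rw [spow, mul_assoc, ← mul_assoc c', h, ew, cw]⟩
  obtain ⟨c', hc'⟩ := this k
  have h1 : e * e' = e := by rw [← hc', mul_assoc, hk]
  have h2 : e * e' = e' := by rw [← q.xg, ← mul_assoc, ew]
  have h3 : e' = e := by rw [← h2, h1]
  subst h3
  exact ⟨v, q.eg, q.ge, q.xg, q.gx'⟩

theorem prim_of_intertwine {S : Type*} [Semigroup S] (hGB : GroupBound S) {x e y f l l' a b : S}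
    (xe : x * e = x) (fy : f * y = y) (yf : y * f = y)
    (le : l * e = l) (fl : f * l = l) (al : a * l = e) (yl : y * l = l * x)
    (l'f : l' * f = l') (el' : e * l' = l') (bl' : b * l' = f) : PrimConj x y := by
  have hw : (a * b) * (l' * l) = e := by
    rw [mul_assoc, ← mul_assoc b, bl', fl, al]
  have hw' : (b * a) * (l * l') = f := by
    rw [mul_assoc, ← mul_assoc a, al, el', bl']
  obtain ⟨v, ev, ve, wv, vw⟩ := left_inv_inv hGB (by rw [← mul_assoc, el']) hw
  obtain ⟨t, ft, tf, wt, tw⟩ := left_inv_inv hGB (by rw [← mul_assoc, fl]) hw'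
  have h1 : x * v * l' * l = x := by rw [mul_assoc, mul_assoc, vw, xe]
  have h2 : l * v * l' = f := by
    calc l * v * l' = f * (l * v * l') := by simp only [← mul_assoc, fl]
      _ = t * (l * ((l' * l) * v) * l') := by rw [← tw]; simp only [mul_assoc]
      _ = f := by rw [wv, le, tw]
  have h3 : l * (x * v * l') = y := by
    calc l * (x * v * l') = (l * x) * v * l' := by simp only [mul_assoc]
      _ = y * (l * v * l') := by rw [← yl]; simp only [mul_assoc]
      _ = y := by rw [h2, yf]
  have := primConj_mul (x * v * l') l
  rwa [h1, h3] at this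

/-! ### Characters -/

theorem charEq_univ {S : Type*} [Semigroup S] {x y : S} (h : CharEq x y)
    (V : Type*) [AddCommGroup V] [Module ℂ V] [FiniteDimensional ℂ V]
    (φ : S →ₙ* Module.End ℂ V) :
    LinearMap.trace ℂ V (φ x) = LinearMap.trace ℂ V (φ y) := by
  let E : V ≃ₗ[ℂ] (Fin (Module.finrank ℂ V) → ℂ) := (Module.finBasis ℂ V).equivFun
  let ψ : S →ₙ* Module.End ℂ (Fin (Module.finrank ℂ V) → ℂ) :=
    { toFun := fun s => E.conj (φ s)
      map_mul' := fun s t => by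
        rw [map_mul, Module.End.mul_eq_comp, LinearEquiv.conj_comp]; rfl }
  have := h _ inferInstance inferInstance inferInstance ψ
  simpa only [ψ, MulHom.coe_mk, LinearMap.trace_conj'] using this

theorem charEq_comm {S : Type*} [Semigroup S] {x y : S} (h : CharEq x y)
    (V : Type*) [AddCommGroup V] [Module ℂ V] [FiniteDimensional ℂ V]
    (φ : S →ₙ* Module.End ℂ V) (R : Module.End ℂ V) (hR : ∀ s, Commute R (φ s)) :
    LinearMap.trace ℂ V (φ x * R) = LinearMap.trace ℂ V (φ y * R) := by
  classical
  have hint : DirectSum.IsInternal R.maxGenEigenspace := by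
    rw [DirectSum.isInternal_submodule_iff_iSupIndep_and_iSup_eq_top]
    exact ⟨R.independent_maxGenEigenspace, R.iSup_maxGenEigenspace_eq_top⟩
  have hm : ∀ s μ, Set.MapsTo (φ s) (R.maxGenEigenspace μ) (R.maxGenEigenspace μ) :=
    fun s μ => Module.End.mapsTo_maxGenEigenspace_of_comm (hR s) μ
  have hmR : ∀ μ, Set.MapsTo R (R.maxGenEigenspace μ) (R.maxGenEigenspace μ) :=
    fun μ => Module.End.mapsTo_maxGenEigenspace_of_comm (Commute.refl R) μ
  have hfin : {μ | R.maxGenEigenspace μ ≠ ⊥}.Finite :=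
    WellFoundedGT.finite_ne_bot_of_iSupIndep R.independent_maxGenEigenspace
  have hm2 : ∀ s μ, Set.MapsTo (φ s * R) (R.maxGenEigenspace μ) (R.maxGenEigenspace μ) :=
    fun s μ => (hm s μ).comp (hmR μ)
  rw [LinearMap.trace_eq_sum_trace_restrict' hint hfin (hm2 x),
    LinearMap.trace_eq_sum_trace_restrict' hint hfin (hm2 y)]
  refine Finset.sum_congr rfl fun μ _ => ?_
  have key : ∀ s, LinearMap.trace ℂ _ ((φ s * R).restrict (hm2 s μ)) =
      μ * LinearMap.trace ℂ _ ((φ s).restrict (hm s μ)) := by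
    intro s
    have hn := R.isNilpotent_restrict_maxGenEigenspace_sub_algebraMap μ
    rw [← LinearMap.trace_comp_eq_mul_of_commute_of_isNilpotent (g := R.restrict (hmR μ)) μ]
    · rfl
    · ext v
      have := congrArg (fun f => f (v : V)) (hR s).symm.eq
      exact this
    · exact hn
  rw [key, key]
  congr 1
  exact charEq_univ h _
    { toFun := fun s => (φ s).restrict (hm s μ)
      map_mul' := fun s t => by
        ext v
        exact congrArg (fun f : Module.End ℂ V => f (v : V)) (map_mul φ s t) }

theorem exists_fixed {S : Type*} [Semigroup S] (hD : FiniteDClasses S) {x y : S} (h : CharEq x y)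
    {e g : S} (ee : e * e = e) (ex : e * x = x) (xe : x * e = x) (eg : e * g = g) (ge : g * e = g)
    (xg : x * g = e) (gx : g * x = e) :
    ∃ l a, l * e = l ∧ a * l = e ∧ y * (l * g) = l := by
  classical
  let X : Set S := {l | l * e = l ∧ ∃ a, a * l = e}
  have hX : X.Finite := by
    refine (hD e).subset ?_
    rintro l ⟨h1, a, h2⟩
    refine ⟨l, ⟨⟨a, ?_⟩, ⟨l, ?_⟩⟩, ⟨1, by simp⟩, ⟨1, by simp⟩⟩
    · rw [← WithOne.coe_mul, h2]
    · rw [← WithOne.coe_mul, h1]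
  haveI : Fintype X := hX.fintype
  have X1 : ∀ s t, t * e = t → s * t ∈ X → t ∈ X := by
    rintro s t h0 ⟨_, a, h2⟩
    exact ⟨h0, a * s, by rw [mul_assoc, h2]⟩
  have X2 : ∀ j ∈ X, j * g ∈ X := by
    rintro j ⟨h1, a, h2⟩
    exact ⟨by rw [mul_assoc, ge], x * a, by rw [mul_assoc, ← mul_assoc a, h2, eg, xg]⟩
  have X3 : ∀ t, t * e = t → t * g ∈ X → t ∈ X := by
    rintro t h0 ⟨_, a, h2⟩
    refine ⟨h0, g * a, ?_⟩
    calc g * a * t = g * (a * (t * e)) := by rw [h0, mul_assoc]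
      _ = g * (a * (t * g)) * x := by rw [← gx]; simp only [mul_assoc]
      _ = e := by rw [h2, ge, gx]
  let M : S → Matrix X X ℂ := fun s => Matrix.of fun i j => if s * (j : S) = i then 1 else 0
  let N : Matrix X X ℂ := Matrix.of fun i j => if (j : S) * g = i then 1 else 0
  have hMM : ∀ s t, M (s * t) = M s * M t := by
    intro s t
    ext i j
    simp only [M, Matrix.mul_apply, Matrix.of_apply]
    by_cases hj : t * (j : S) ∈ X
    · rw [Finset.sum_eq_single ⟨t * (j : S), hj⟩]
      · simp [mul_assoc]
      · intro k _ hk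
        rw [if_neg (c := t * (j : S) = k), mul_zero]
        intro hh
        exact hk (Subtype.ext hh.symm)
      · simp
    · rw [Finset.sum_eq_zero, if_neg]
      · intro hh
        refine hj (X1 s _ (by rw [mul_assoc, j.2.1]) ?_)
        rw [← mul_assoc, hh]; exact i.2
      · intro k _
        rw [if_neg (c := t * (j : S) = k), mul_zero]
        intro hh
        exact hj (hh ▸ k.2)
  have hMN : ∀ s i j, (M s * N) i j = if s * ((j : S) * g) = i then 1 else 0 := by
    intro s i j
    simp only [M, N, Matrix.mul_apply, Matrix.of_apply]
    rw [Finset.sum_eq_single ⟨(j : S) * g, X2 j j.2⟩]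
    · simp
    · intro k _ hk
      rw [if_neg (c := (j : S) * g = k), mul_zero]
      intro hh
      exact hk (Subtype.ext hh.symm)
    · simp
  have hNM : ∀ s i j, (N * M s) i j = if s * ((j : S) * g) = i then 1 else 0 := by
    intro s i j
    simp only [M, N, Matrix.mul_apply, Matrix.of_apply]
    by_cases hj : s * (j : S) ∈ X
    · rw [Finset.sum_eq_single ⟨s * (j : S), hj⟩]
      · simp [mul_assoc]
      · intro k _ hk
        rw [if_neg (c := s * (j : S) = k), mul_zero]
        intro hh
        exact hk (Subtype.ext hh.symm)
      · simp
    · rw [Finset.sum_eq_zero, if_neg]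
      · intro hh
        refine hj (X3 _ (by rw [mul_assoc, j.2.1]) ?_)
        rw [mul_assoc, hh]; exact i.2
      · intro k _
        rw [if_neg (c := s * (j : S) = k), mul_zero]
        intro hh
        exact hj (hh ▸ k.2)
  let φ : S →ₙ* Module.End ℂ (X → ℂ) :=
    { toFun := fun s => Matrix.toLinAlgEquiv' (M s)
      map_mul' := fun s t => by rw [hMM, map_mul] }
  have key := charEq_comm h (X → ℂ) φ (Matrix.toLinAlgEquiv' N) (fun s => by
    change _ * Matrix.toLinAlgEquiv' (M s) = Matrix.toLinAlgEquiv' (M s) * _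
    have hc : N * M s = M s * N := by
      ext i j
      rw [hMN, hNM]
    rw [← map_mul Matrix.toLinAlgEquiv' N (M s), ← map_mul Matrix.toLinAlgEquiv' (M s) N, hc])
  have htr : ∀ s, LinearMap.trace ℂ (X → ℂ) (φ s * Matrix.toLinAlgEquiv' N) =
      ((Finset.univ.filter fun i : X => s * ((i : S) * g) = i).card : ℂ) := by
    intro s
    change LinearMap.trace ℂ (X → ℂ) (Matrix.toLinAlgEquiv' (M s) * _) = _
    rw [← map_mul Matrix.toLinAlgEquiv' (M s) N]
    change LinearMap.trace ℂ (X → ℂ) (Matrix.toLin' (M s * N)) = _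
    rw [Matrix.trace_toLin'_eq, Matrix.trace]
    simp only [Matrix.diag_apply, hMN, Finset.sum_boole]
  rw [htr, htr, Nat.cast_inj] at key
  have heX : e ∈ X := ⟨ee, e, ee⟩
  have hpos : 0 < (Finset.univ.filter fun i : X => x * ((i : S) * g) = i).card :=
    Finset.card_pos.2 ⟨⟨e, heX⟩, by simp [eg, xg]⟩
  rw [key] at hpos
  obtain ⟨⟨l, hl, a, ha⟩, hi⟩ := Finset.card_pos.1 hpos
  exact ⟨l, a, hl, ha, by simpa using hi⟩

theorem charEq_of_primConj {S : Type*} [Semigroup S] {x y : S} (h : PrimConj x y) :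
    CharEq x y := by
  obtain ⟨u, v, h1, h2⟩ := h
  intro V _ _ _ φ
  have e : ∀ s : S, φ s = WithOne.lift φ (s : WithOne S) := fun s => (WithOne.lift_coe φ s).symm
  rw [e, e, h1, h2, map_mul (WithOne.lift φ), map_mul (WithOne.lift φ), LinearMap.trace_mul_comm]

theorem charEq_of_sgConj {S : Type*} [Semigroup S] {x y : S} (h : SgConj x y) :
    CharEq x y := by
  induction h with
  | single h => exact charEq_of_primConj h
  | tail _ h ih =>
    intro V i1 i2 i3 φ
    rw [ih V i1 i2 i3 φ, charEq_of_primConj h V i1 i2 i3 φ]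

theorem charEq_symm {S : Type*} [Semigroup S] {x y : S} (h : CharEq x y) : CharEq y x :=
  fun V i1 i2 i3 φ => (h V i1 i2 i3 φ).symm

theorem charEq_trans {S : Type*} [Semigroup S] {x y z : S} (h : CharEq x y) (h' : CharEq y z) :
    CharEq x z :=
  fun V i1 i2 i3 φ => (h V i1 i2 i3 φ).trans (h' V i1 i2 i3 φ)

/-- From a fixed point, derive an intertwiner. -/
theorem intertwine {S : Type*} [Semigroup S] {x e g y f l : S} (gx : g * x = e)
    (fy : f * y = y) (le : l * e = l) (h : y * (l * g) = l) : f * l = l ∧ y * l = l * x := by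
  constructor
  · rw [← h, ← mul_assoc, fy]
  · calc y * l = y * (l * (g * x)) := by rw [gx, le]
      _ = y * (l * g) * x := by simp only [mul_assoc]
      _ = l * x := by rw [h]

/-- Theorem 1: in a regular group-bound semigroup with finite `D`-classes,
two elements are conjugate iff they are conjugate in the character sense. -/
theorem conj_iff_charEq {S : Type*} [Semigroup S]
    (hreg : Regular S) (hGB : GroupBound S) (hD : FiniteDClasses S)
    (x y : S) : SgConj x y ↔ CharEq x y := by
  refine ⟨charEq_of_sgConj, fun h => ?_⟩
  obtain ⟨e, g, q, k, hk⟩ := exists_Q hGB x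
  obtain ⟨f, g', q', k', hk'⟩ := exists_Q hGB y
  have cx := sgConj_mul_idem hreg k x e g q hk
  have cy := sgConj_mul_idem hreg k' y f g' q' hk'
  have h' : CharEq (x * e) (y * f) :=
    charEq_trans (charEq_symm (charEq_of_sgConj cx)) (charEq_trans h (charEq_of_sgConj cy))
  have P : ∀ {x e g : S}, Q x e g → e * (x * e) = x * e ∧ x * e * e = x * e ∧
      x * e * g = e ∧ g * (x * e) = e := fun {x e g} q => by
    refine ⟨?_, ?_, ?_, ?_⟩
    · rw [← mul_assoc, q.ex, mul_assoc, q.ee]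
    · rw [mul_assoc, q.ee]
    · rw [mul_assoc, q.eg, q.xg]
    · rw [← mul_assoc, q.gx', q.ee]
  obtain ⟨a1, a2, a3, a4⟩ := P q
  obtain ⟨b1, b2, b3, b4⟩ := P q'
  obtain ⟨l, a, le, al, hl⟩ := exists_fixed hD h' q.ee a1 a2 q.eg q.ge a3 a4
  obtain ⟨l', b, l'f, bl', hl'⟩ := exists_fixed hD (charEq_symm h') q'.ee b1 b2 q'.eg q'.ge b3 b4
  obtain ⟨fl, yl⟩ := intertwine a4 b1 le hl
  obtain ⟨el', _⟩ := intertwine b4 a1 l'f hl'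
  have hp : PrimConj (x * e) (y * f) :=
    prim_of_intertwine hGB a2 b1 b2 le fl al yl l'f el' bl'
  exact (cx.tail hp).trans (sgConj_symm cy)

end SgConjPaper
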